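/- Let V be a 2n-dimensional symplectic space, x a self-adjoint endomorphism with x² = 0 of Jordan type (2^{2n₂} 1^{2n₁}), and suppose F, F' are k-dimensional isotropic subspaces of ker(x) with dim(F ∩ Im(x)) = k₂+1, dim(F ∩ x(F^⊥)) = k₂−2h−1 and the parameter set X(k₂,h) (subspaces with intersection dimensions k₂ and k₂−2h) is nonempty. Then every F with parameters (k₂+1, h+1) lies in the Zariski closure of the set of subspaces with parameters (k₂, h). -/

import Mathlib

open Module Submodule LinearMap

noncomputable section

variable {V : Type*} [AddCommGroup V] [Module ℂ V]

/-- Perpendicular of a subspace with respect to a bilinear form. -/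
def perp (B : V →ₗ[ℂ] V →ₗ[ℂ] ℂ) (W : Submodule ℂ V) : Submodule ℂ V where
  carrier := {v | ∀ w ∈ W, B v w = 0}
  add_mem' := by
    intro a b ha hb w hw
    simp [map_add, ha w hw, hb w hw]
  zero_mem' := by intro w hw; simp
  smul_mem' := by
    intro c a ha w hw
    simp [map_smul, ha w hw]

@[simp] lemma mem_perp {B : V →ₗ[ℂ] V →ₗ[ℂ] ℂ} {W : Submodule ℂ V} {v : V} :
    v ∈ perp B W ↔ ∀ w ∈ W, B v w = 0 := Iff.rfl

/-- The subquotient W/U for U ≤ W. -/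
abbrev SubQuot (W U : Submodule ℂ V) : Type _ := W ⧸ (U.comap W.subtype)

/-- The endomorphism induced on the subquotient W/U by x. -/
def subQuotMap (x : V →ₗ[ℂ] V) (W U : Submodule ℂ V)
    (hW : ∀ v ∈ W, x v ∈ W) (hU : ∀ v ∈ U, x v ∈ U) :
    SubQuot W U →ₗ[ℂ] SubQuot W U :=
  Submodule.mapQ _ _ (x.restrict hW) (by
    intro a ha
    simp only [Submodule.mem_comap, LinearMap.restrict_apply, Submodule.coe_subtype] at ha ⊢
    exact hU a.1 ha)

/-- The Zariski topology on a complex vector space. -/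
def zariski (M : Type*) [AddCommGroup M] [Module ℂ M] : TopologicalSpace M :=
  TopologicalSpace.generateFrom
    {U | ∃ f : M → ℂ,
      f ∈ Algebra.adjoin ℂ {g : M → ℂ | ∃ φ : M →ₗ[ℂ] ℂ, g = ⇑φ} ∧ U = {x | f x ≠ 0}}

/-- The Grassmannian of k-dimensional subspaces of M. -/
def Grass (M : Type*) [AddCommGroup M] [Module ℂ M] (k : ℕ) : Type _ :=
  {F : Submodule ℂ M // finrank ℂ F = k}

/-- The Zariski topology on the Grassmannian, coinduced from the space of
linearly independent k-tuples with its Zariski topology. -/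
instance grassTopology (M : Type*) [AddCommGroup M] [Module ℂ M] (k : ℕ) :
    TopologicalSpace (Grass M k) :=
  TopologicalSpace.coinduced
    (fun v : {v : Fin k → M // LinearIndependent ℂ v} =>
      (⟨Submodule.span ℂ (Set.range v.1),
        (finrank_span_eq_card v.2).trans (by simp)⟩ : Grass M k))
    (TopologicalSpace.induced Subtype.val (zariski (Fin k → M)))

end

/-- The locally closed piece X(k₂,h) of the isotropic Grassmannian of k-dimensional
isotropic subspaces F of ker x with dim(F ∩ Im x) = k₂ and dim(F ∩ x(F^⊥)) = k₂ − 2h,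
viewed inside the Grassmannian of k-dimensional subspaces of V. -/
def Xpiece {V : Type*} [AddCommGroup V] [Module ℂ V]
    (B : V →ₗ[ℂ] V →ₗ[ℂ] ℂ) (x : V →ₗ[ℂ] V) (k k₂ h : ℕ) : Set (Grass V k) :=
  {F | F.1 ≤ LinearMap.ker x ∧ F.1 ≤ perp B F.1 ∧
    finrank ℂ ↥(F.1 ⊓ LinearMap.range x) = k₂ ∧
    finrank ℂ ↥(F.1 ⊓ (perp B F.1).map x) + 2 * h = k₂}

/-! Let `F` be in `X(k₂ + 1, h + 1)` and `G` in `X(k₂, h)`. Counting the rank of the pairing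
`F × G → ℂ` from both sides gives `u ∈ G` with `u ⊥ F` and `u ∉ F + Im x`, because `G` meets
`Im x` in a smaller dimension than `F` does. Since `F ∩ x(F^⊥)` is smaller than `F ∩ Im x`, there
is also `a` with `x a ∈ F` and `x a ∉ x(F^⊥)`. Consider the line of transvections `F_t`, the image
of `F` under `f ↦ f + t B(a, f) u`. Each `F_t` is isotropic in `ker x`, and for `t ≠ 0` the
intersection `F_t ∩ Im x` is the hyperplane `B(a, ·) = 0` of `F ∩ Im x`; passing to it enlarges
the radical `F ∩ x(F^⊥)` by the single vector `x a`. So `F_t` is in `X(k₂, h)` for `t ≠ 0`, while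
a Zariski open set containing `F = F_0` contains `F_t` for all but finitely many `t`. -/

section Transvection

variable {K V : Type*} [Field K] [AddCommGroup V] [Module K V]

lemma map_transvection_le_sup_span (F : Submodule K V) (φ : Dual K V) (u : V) :
    F.map (transvection φ u) ≤ F ⊔ K ∙ u := by
  rintro _ ⟨f, hf, rfl⟩
  exact add_mem_sup hf (smul_mem _ _ (mem_span_singleton_self u))

lemma map_transvection_inf_eq_inf_ker {F R : Submodule K V} {u : V} (hu : u ∉ F ⊔ R)
    (φ : Dual K V) : F.map (transvection φ u) ⊓ R = F ⊓ R ⊓ ker φ := by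
  ext y
  constructor
  · rintro ⟨⟨f, hf, rfl⟩, hR⟩
    rw [transvection.apply] at hR ⊢
    have hφ : φ f = 0 := by
      by_contra hφ
      refine hu ((Submodule.smul_mem_iff _ hφ).1 ?_)
      rw [← neg_add_cancel_left f (φ f • u)]
      exact add_mem_sup (F.neg_mem hf) hR
    simp only [hφ, zero_smul, add_zero] at hR ⊢
    exact ⟨⟨hf, hR⟩, hφ⟩
  · rintro ⟨⟨hF, hR⟩, hφ⟩
    exact ⟨⟨y, hF, by rw [transvection.apply, mem_ker.1 hφ, zero_smul, add_zero]⟩, hR⟩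

lemma finrank_map_transvection {F : Submodule K V} {u : V} (hu : u ∉ F) (φ : Dual K V) :
    finrank K (F.map (transvection φ u)) = finrank K F := by
  rw [← range_domRestrict]
  refine finrank_range_of_inj ((injective_iff_map_eq_zero _).2 ?_)
  rintro ⟨f, hf⟩ h
  rw [domRestrict_apply, transvection.apply] at h
  have hφ : φ f = 0 := by
    by_contra hφ
    refine hu ((Submodule.smul_mem_iff _ hφ).1 ?_)
    rw [← neg_eq_of_add_eq_zero_right h]
    exact F.neg_mem hf
  simpa [hφ] using h

end Transvection

section Dimension

variable {K V : Type*} [Field K] [AddCommGroup V] [Module K V] [FiniteDimensional K V]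

lemma finrank_inf_ker_add_one {D : Submodule K V} {φ : Dual K V} (h : ¬ D ≤ ker φ) :
    finrank K ↥(D ⊓ ker φ) + 1 = finrank K D := by
  have hφ : φ.domRestrict D ≠ 0 := fun h0 => h fun d hd =>
    mem_ker.2 (DFunLike.congr_fun h0 ⟨d, hd⟩)
  rw [← Dual.finrank_ker_add_one_of_ne_zero hφ, ker_domRestrict, ← map_comap_subtype,
    finrank_map_subtype_eq]

lemma finrank_inf_sup_add_finrank_inf (F G R : Submodule K V) :
    finrank K ↥(F ⊓ (G ⊔ R)) + finrank K ↥(G ⊓ R) =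
      finrank K ↥(G ⊓ (F ⊔ R)) + finrank K ↥(F ⊓ R) := by
  have hFGR := finrank_sup_add_finrank_inf_eq F (G ⊔ R)
  have hGFR := finrank_sup_add_finrank_inf_eq G (F ⊔ R)
  have hFR := finrank_sup_add_finrank_inf_eq F R
  have hGR := finrank_sup_add_finrank_inf_eq G R
  rw [sup_left_comm] at hGFR
  omega

end Dimension

section Perp

variable {V : Type*} [AddCommGroup V] [Module ℂ V] {B : V →ₗ[ℂ] V →ₗ[ℂ] ℂ} {x : V →ₗ[ℂ] V}

lemma perp_anti {W W' : Submodule ℂ V} (h : W ≤ W') : perp B W' ≤ perp B W :=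
  fun _ hv w hw => hv w (h hw)

lemma le_perp_comm (hB : B.IsAlt) {W W' : Submodule ℂ V} : W ≤ perp B W' ↔ W' ≤ perp B W :=
  ⟨fun h _ hw _ hv => hB.isRefl _ _ (h hv _ hw), fun h _ hv _ hw => hB.isRefl _ _ (h hw _ hv)⟩

lemma perp_sup (W W' : Submodule ℂ V) : perp B (W ⊔ W') = perp B W ⊓ perp B W' := by
  refine le_antisymm (le_inf (perp_anti le_sup_left) (perp_anti le_sup_right)) ?_
  rintro v ⟨hv, hv'⟩ _ hs
  obtain ⟨w, hw, w', hw', rfl⟩ := mem_sup.1 hs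
  rw [map_add, hv w hw, hv' w' hw', add_zero]

lemma perp_span_singleton (hB : B.IsAlt) (a : V) : perp B (ℂ ∙ a) = ker (B a) := by
  ext v
  refine ⟨fun hv => hB.isRefl _ _ (hv a (mem_span_singleton_self a)), fun hv w hw => ?_⟩
  obtain ⟨c, rfl⟩ := mem_span_singleton.1 hw
  rw [map_smul, hB.isRefl _ _ hv, smul_zero]

lemma sup_span_le_perp_self (hB : B.IsAlt) {F : Submodule ℂ V} {u : V} (hF : F ≤ perp B F)
    (hu : u ∈ perp B F) : F ⊔ ℂ ∙ u ≤ perp B (F ⊔ ℂ ∙ u) := by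
  have hu' : ℂ ∙ u ≤ perp B F := (span_singleton_le_iff_mem _ _).2 hu
  have huu : ℂ ∙ u ≤ perp B (ℂ ∙ u) := by
    rw [perp_span_singleton hB, span_singleton_le_iff_mem]
    exact hB u
  rw [perp_sup]
  exact sup_le (le_inf hF ((le_perp_comm hB).1 hu')) (le_inf hu' huu)

lemma range_le_perp_ker (hx : B.IsSelfAdjoint x) : range x ≤ perp B (ker x) := by
  rintro _ ⟨v, rfl⟩ w hw
  rw [hx, mem_ker.1 hw, map_zero]

lemma apply_self_map_eq_zero (hB : B.IsAlt) (hx : B.IsSelfAdjoint x) (a : V) :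
    B a (x a) = 0 :=
  self_eq_neg.1 ((hx a a).symm.trans (hB.neg _ _).symm)

lemma perp_range_le_ker (hnd : B.SeparatingLeft) (hx : B.IsSelfAdjoint x) :
    perp B (range x) ≤ ker x :=
  fun v hv => hnd _ fun w => (hx v w).trans (hv _ ⟨w, rfl⟩)

lemma perp_eq_orthogonal (hB : B.IsAlt) (W : Submodule ℂ V) :
    perp B W = BilinForm.orthogonal B W := by
  ext v
  exact ⟨fun h w hw => hB.isRefl _ _ (h w hw), fun h w hw => hB.isRefl _ _ (h w hw)⟩

variable [FiniteDimensional ℂ V]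

lemma finrank_add_finrank_perp (hB : B.IsAlt) (hnd : B.SeparatingLeft) (W : Submodule ℂ V) :
    finrank ℂ W + finrank ℂ (perp B W) = finrank ℂ V := by
  have hnd' := hB.isRefl.nondegenerate_iff_separatingLeft.2 hnd
  rw [perp_eq_orthogonal hB, BilinForm.finrank_orthogonal hnd']
  exact Nat.add_sub_cancel' (finrank_le W)

lemma perp_perp (hB : B.IsAlt) (hnd : B.SeparatingLeft) (W : Submodule ℂ V) :
    perp B (perp B W) = W := by
  have hnd' := hB.isRefl.nondegenerate_iff_separatingLeft.2 hnd
  rw [perp_eq_orthogonal hB, perp_eq_orthogonal hB,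
    BilinForm.orthogonal_orthogonal hnd' hB.isRefl]

lemma perp_inf (hB : B.IsAlt) (hnd : B.SeparatingLeft) (W W' : Submodule ℂ V) :
    perp B (W ⊓ W') = perp B W ⊔ perp B W' := by
  rw [← perp_perp hB hnd (perp B W ⊔ perp B W'), perp_sup, perp_perp hB hnd, perp_perp hB hnd]

lemma perp_ker (hB : B.IsAlt) (hnd : B.SeparatingLeft) (a : V) :
    perp B (ker (B a)) = ℂ ∙ a := by
  rw [← perp_span_singleton hB, perp_perp hB hnd]

lemma finrank_add_finrank_inf_perp (hB : B.IsAlt) (hnd : B.SeparatingLeft)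
    (F G : Submodule ℂ V) :
    finrank ℂ F + finrank ℂ ↥(G ⊓ perp B F) = finrank ℂ G + finrank ℂ ↥(F ⊓ perp B G) := by
  have hperp : perp B (F ⊔ perp B G) = G ⊓ perp B F := by
    rw [perp_sup, perp_perp hB hnd, inf_comm]
  have hsup := finrank_add_finrank_perp hB hnd (F ⊔ perp B G)
  have hG := finrank_add_finrank_perp hB hnd G
  have hsum := finrank_sup_add_finrank_inf_eq F (perp B G)
  rw [hperp] at hsup
  omega

lemma exists_mem_perp_notMem_sup (hB : B.IsAlt) (hnd : B.SeparatingLeft)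
    {F G R : Submodule ℂ V} (hG : G ⊔ R ≤ perp B G) (hdim : finrank ℂ F ≤ finrank ℂ G)
    (hR : finrank ℂ ↥(G ⊓ R) < finrank ℂ ↥(F ⊓ R)) :
    ∃ u ∈ G, u ∈ perp B F ∧ u ∉ F ⊔ R := by
  by_contra! h
  have hle : G ⊓ perp B F ≤ G ⊓ (F ⊔ R) := fun u hu => ⟨hu.1, h u hu.1 hu.2⟩
  have hG' := finrank_mono (inf_le_inf_left F hG)
  have hswap := finrank_inf_sup_add_finrank_inf F G R
  have hpair := finrank_add_finrank_inf_perp hB hnd F G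
  have := finrank_mono hle
  omega

lemma map_perp_inf_range (hB : B.IsAlt) (hnd : B.SeparatingLeft) (hx : B.IsSelfAdjoint x)
    (F : Submodule ℂ V) : (perp B (F ⊓ range x)).map x = (perp B F).map x := by
  have hbot : (perp B (range x)).map x = ⊥ :=
    le_ker_iff_map.1 (perp_range_le_ker hnd hx)
  rw [perp_inf hB hnd, Submodule.map_sup, hbot, sup_bot_eq]

end Perp

section ImageRadical

variable {V : Type*} [AddCommGroup V] [Module ℂ V]

/-- The subspace `F ∩ x(F^⊥)` of the definition of `X(k₂, h)`. For `B` symplectic and `x`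
self-adjoint, it is the radical of the alternating form `(x a, x b) ↦ B(a, x b)` on
`F ∩ Im x`. -/
def imageRadical (B : V →ₗ[ℂ] V →ₗ[ℂ] ℂ) (x : V →ₗ[ℂ] V) (F : Submodule ℂ V) :
    Submodule ℂ V :=
  F ⊓ (perp B F).map x

variable {B : V →ₗ[ℂ] V →ₗ[ℂ] ℂ} {x : V →ₗ[ℂ] V}

lemma mem_Xpiece_iff {k k₂ h : ℕ} {F : Grass V k} :
    F ∈ Xpiece B x k k₂ h ↔ F.1 ≤ ker x ∧ F.1 ≤ perp B F.1 ∧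
      finrank ℂ ↥(F.1 ⊓ range x) = k₂ ∧ finrank ℂ (imageRadical B x F.1) + 2 * h = k₂ :=
  Iff.rfl

variable [FiniteDimensional ℂ V]

lemma imageRadical_inf_range (hB : B.IsAlt) (hnd : B.SeparatingLeft)
    (hx : B.IsSelfAdjoint x) (F : Submodule ℂ V) :
    imageRadical B x (F ⊓ range x) = imageRadical B x F := by
  rw [imageRadical, map_perp_inf_range hB hnd hx, inf_assoc, inf_eq_right.2 map_le_range,
    imageRadical]

lemma imageRadical_inf_ker (hB : B.IsAlt) (hnd : B.SeparatingLeft) (hx : B.IsSelfAdjoint x)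
    {D : Submodule ℂ V} {a : V} (ha : x a ∈ D) :
    imageRadical B x (D ⊓ ker (B a)) = imageRadical B x D ⊔ ℂ ∙ x a := by
  have hspan : ℂ ∙ x a ≤ D := (span_singleton_le_iff_mem _ _).2 ha
  have hker : imageRadical B x D ⊔ ℂ ∙ x a ≤ ker (B a) := by
    refine sup_le ?_ ((span_singleton_le_iff_mem _ _).2 (apply_self_map_eq_zero hB hx a))
    rintro _ ⟨-, v, hv, rfl⟩
    rw [mem_ker, ← hx]
    exact hB.isRefl _ _ (hv _ ha)
  calc imageRadical B x (D ⊓ ker (B a))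
      = ker (B a) ⊓ (((perp B D).map x ⊔ ℂ ∙ x a) ⊓ D) := by
        rw [imageRadical, perp_inf hB hnd, perp_ker hB hnd, Submodule.map_sup, Submodule.map_span,
          Set.image_singleton, inf_comm D, inf_assoc, inf_comm D]
    _ = ker (B a) ⊓ (imageRadical B x D ⊔ ℂ ∙ x a) := by
        rw [sup_comm, sup_inf_assoc_of_le _ hspan, sup_comm, inf_comm _ D, imageRadical]
    _ = imageRadical B x D ⊔ ℂ ∙ x a := inf_eq_right.2 hker

lemma exists_map_mem_notMem_imageRadical {F : Submodule ℂ V}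
    (h : finrank ℂ (imageRadical B x F) < finrank ℂ ↥(F ⊓ range x)) :
    ∃ a, x a ∈ F ∧ x a ∉ imageRadical B x F := by
  by_contra! hle
  refine h.not_ge (finrank_mono ?_)
  rintro _ ⟨hF, a, rfl⟩
  exact hle a hF

lemma not_inf_range_le_ker (hB : B.IsAlt) (hnd : B.SeparatingLeft) (hx : B.IsSelfAdjoint x)
    {F : Submodule ℂ V} {a : V} (ha : x a ∈ F) (ha' : x a ∉ imageRadical B x F) :
    ¬ F ⊓ range x ≤ ker (B a) := by
  intro hle
  rw [← imageRadical_inf_range hB hnd hx] at ha'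
  exact ha' ⟨⟨ha, a, rfl⟩, a, fun w hw => hle hw, rfl⟩

lemma finrank_imageRadical_map_transvection (hB : B.IsAlt) (hnd : B.SeparatingLeft)
    (hx : B.IsSelfAdjoint x) {F : Submodule ℂ V} {a u : V} (ha : x a ∈ F)
    (ha' : x a ∉ imageRadical B x F) (hu : u ∉ F ⊔ range x) :
    finrank ℂ (imageRadical B x (F.map (transvection (B a) u))) =
      finrank ℂ (imageRadical B x F) + 1 := by
  have haD : x a ∈ F ⊓ range x := ⟨ha, a, rfl⟩
  rw [← imageRadical_inf_range hB hnd hx, map_transvection_inf_eq_inf_ker hu,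
    imageRadical_inf_ker hB hnd hx haD, imageRadical_inf_range hB hnd hx,
    finrank_sup_span_singleton ha']

lemma exists_mem_Xpiece_eq_map_transvection (hB : B.IsAlt) (hnd : B.SeparatingLeft)
    (hx : B.IsSelfAdjoint x) {k k₂ h : ℕ} {F : Grass V k}
    (hF : F ∈ Xpiece B x k (k₂ + 1) (h + 1)) {a u : V} (ha : x a ∈ F.1)
    (ha' : x a ∉ imageRadical B x F.1) (hux : u ∈ ker x) (huF : u ∈ perp B F.1)
    (hu : u ∉ F.1 ⊔ range x) :
    ∃ G ∈ Xpiece B x k k₂ h, G.1 = F.1.map (transvection (B a) u) := by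
  obtain ⟨hker, hiso, hrange, hrad⟩ := mem_Xpiece_iff.1 hF
  have hle := map_transvection_le_sup_span F.1 (B a) u
  have hspan : F.1 ⊔ ℂ ∙ u ≤ perp B (F.1 ⊔ ℂ ∙ u) := sup_span_le_perp_self hB hiso huF
  have hrange' := finrank_inf_ker_add_one (not_inf_range_le_ker hB hnd hx ha ha')
  rw [← map_transvection_inf_eq_inf_ker hu] at hrange'
  have hrad' := finrank_imageRadical_map_transvection hB hnd hx ha ha' hu
  have hdim := finrank_map_transvection (fun h => hu (mem_sup_left h)) (B a)
  refine ⟨⟨F.1.map (transvection (B a) u), hdim.trans F.2⟩,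
    mem_Xpiece_iff.2 ⟨?_, ?_, ?_, ?_⟩, rfl⟩
  · exact hle.trans (sup_le hker ((span_singleton_le_iff_mem _ _).2 hux))
  · exact hle.trans (hspan.trans (perp_anti hle))
  · exact Nat.succ_injective (hrange'.trans hrange)
  · dsimp only
    omega

end ImageRadical

section Closure

open Filter Polynomial Topology

variable {M : Type*} [AddCommGroup M] [Module ℂ M] {k : ℕ}

lemma exists_polynomial_eval_eq_apply_line {f : M → ℂ}
    (hf : f ∈ Algebra.adjoin ℂ {g : M → ℂ | ∃ φ : M →ₗ[ℂ] ℂ, g = ⇑φ}) (v w : M) :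
    ∃ p : ℂ[X], ∀ t : ℂ, f (v + t • w) = p.eval t := by
  induction hf using Algebra.adjoin_induction with
  | mem g hg =>
    obtain ⟨φ, rfl⟩ := hg
    exact ⟨C (φ v) + X * C (φ w), fun t => by simp [mul_comm t]⟩
  | algebraMap r => exact ⟨C r, fun t => by simp⟩
  | add f g _ _ hf hg =>
    obtain ⟨p, hp⟩ := hf
    obtain ⟨q, hq⟩ := hg
    exact ⟨p + q, fun t => by simp [hp, hq]⟩
  | mul f g _ _ hf hg =>
    obtain ⟨p, hp⟩ := hf
    obtain ⟨q, hq⟩ := hg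
    exact ⟨p * q, fun t => by simp [hp, hq]⟩

lemma eventually_cofinite_add_smul_mem {O : Set M} (hO : IsOpen[zariski M] O) {v : M}
    (hv : v ∈ O) (w : M) : ∀ᶠ t : ℂ in cofinite, v + t • w ∈ O := by
  induction hO with
  | basic U hU =>
    obtain ⟨f, hf, rfl⟩ := hU
    obtain ⟨p, hp⟩ := exists_polynomial_eval_eq_apply_line hf v w
    have hp0 : p ≠ 0 := by
      rintro rfl
      exact hv (by simpa using hp 0)
    filter_upwards [(finite_setOfPred_isRoot hp0).eventually_cofinite_notMem] with t ht
    rwa [hp]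
  | univ => exact Eventually.of_forall fun _ => Set.mem_univ _
  | inter U U' _ _ hU hU' => exact (hU hv.1).and (hU' hv.2)
  | sUnion S _ ih =>
    obtain ⟨U, hUS, hvU⟩ := hv
    exact (ih U hUS hvU).mono fun t ht => ⟨U, hUS, ht⟩

lemma linearIndependent_of_span_range_eq {F : Grass M k} {v : Fin k → M}
    (hv : span ℂ (Set.range v) = F.1) : LinearIndependent ℂ v := by
  rw [linearIndependent_iff_card_eq_finrank_span, Set.finrank, hv, F.2, Fintype.card_fin]

lemma exists_isOpen_zariski_mem_iff {U : Set (Grass M k)} (hU : IsOpen U) :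
    ∃ O : Set (Fin k → M), IsOpen[zariski (Fin k → M)] O ∧
      ∀ (v : Fin k → M) (F : Grass M k), span ℂ (Set.range v) = F.1 → (v ∈ O ↔ F ∈ U) := by
  obtain ⟨O, hO, hOU⟩ := isOpen_coinduced.1 hU
  refine ⟨O, hO, fun v F hv => ?_⟩
  have hF : F = ⟨span ℂ (Set.range v), hv ▸ F.2⟩ := Subtype.ext hv.symm
  rw [hF]
  exact Set.ext_iff.1 hOU ⟨v, linearIndependent_of_span_range_eq hv⟩

lemma mem_closure_of_frequently_span {S : Set (Grass M k)} {F : Grass M k} {v w : Fin k → M}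
    (hv : span ℂ (Set.range v) = F.1)
    (h : ∃ᶠ t : ℂ in cofinite, ∃ G ∈ S, G.1 = span ℂ (Set.range (v + t • w))) :
    F ∈ closure S := by
  refine _root_.mem_closure_iff.2 fun U hU hFU => ?_
  obtain ⟨O, hO, hOU⟩ := exists_isOpen_zariski_mem_iff hU
  have hline := eventually_cofinite_add_smul_mem hO ((hOU v F hv).2 hFU) w
  obtain ⟨t, ⟨G, hGS, hG⟩, ht⟩ := (h.and_eventually hline).exists
  exact ⟨G, (hOU _ G hG.symm).1 ht, hGS⟩

lemma mem_closure_of_frequently_map [FiniteDimensional ℂ M] {S : Set (Grass M k)}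
    {F : Grass M k} (N : M →ₗ[ℂ] M)
    (h : ∃ᶠ t : ℂ in cofinite, ∃ G ∈ S, G.1 = F.1.map (LinearMap.id + t • N)) :
    F ∈ closure S := by
  let b := finBasisOfFinrankEq ℂ F.1 F.2
  let v : Fin k → M := fun i => b i
  have hv : span ℂ (Set.range v) = F.1 := by
    rw [show v = F.1.subtype ∘ b from rfl, Set.range_comp, span_image, b.span_eq,
      map_subtype_top]
  refine mem_closure_of_frequently_span (w := N ∘ v) hv (h.mono fun t ⟨G, hGS, hG⟩ => ?_)
  refine ⟨G, hGS, ?_⟩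
  rw [hG, ← hv, Submodule.map_span, ← Set.range_comp]
  rfl

end Closure

theorem stmt18_general {V : Type*} [AddCommGroup V] [Module ℂ V] [FiniteDimensional ℂ V]
    {B : V →ₗ[ℂ] V →ₗ[ℂ] ℂ} (hB : B.IsAlt) (hnd : B.SeparatingLeft)
    {x : V →ₗ[ℂ] V} (hx : B.IsSelfAdjoint x) {k k₂ h : ℕ}
    (hne : (Xpiece B x k k₂ h).Nonempty) :
    Xpiece B x k (k₂ + 1) (h + 1) ⊆ closure (Xpiece B x k k₂ h) := by
  intro F hF
  obtain ⟨-, -, hrange, hrad⟩ := mem_Xpiece_iff.1 hF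
  obtain ⟨G, hGker, hGiso, hGrange, -⟩ := hne
  have hG : G.1 ⊔ range x ≤ perp B G.1 :=
    sup_le hGiso ((range_le_perp_ker hx).trans (perp_anti hGker))
  obtain ⟨u, huG, huF, hu⟩ := exists_mem_perp_notMem_sup hB hnd (F := F.1) (R := range x) hG
    (F.2.trans G.2.symm).le (by omega)
  obtain ⟨a, ha, ha'⟩ : ∃ a, x a ∈ F.1 ∧ x a ∉ imageRadical B x F.1 :=
    exists_map_mem_notMem_imageRadical (by omega)
  refine mem_closure_of_frequently_map ((B a).smulRight u) (Filter.Eventually.frequently ?_)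
  filter_upwards [(Set.finite_singleton (0 : ℂ)).eventually_cofinite_notMem] with t ht
  have htransvection : LinearMap.id + t • (B a).smulRight u = transvection (B a) (t • u) := by
    ext v
    simp [transvection.apply, smul_comm t]
  rw [htransvection]
  exact exists_mem_Xpiece_eq_map_transvection hB hnd hx hF ha ha' (smul_mem _ t (hGker huG))
    (smul_mem _ t huF) (mt (Submodule.smul_mem_iff _ ht).1 hu)

/-- for self-adjoint x with x² = 0 of Jordan type (2^{2n₂} 1^{2n₁}), if
X(k₂,h) and X(k₂+1,h+1) are both nonempty then X(k₂+1,h+1) lies in the Zariski closure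
of X(k₂,h). -/
theorem stmt18 (V : Type*) [AddCommGroup V] [Module ℂ V] [FiniteDimensional ℂ V]
    (B : V →ₗ[ℂ] V →ₗ[ℂ] ℂ) (hskew : ∀ v w : V, B w v = - B v w)
    (hnondeg : ∀ v : V, (∀ w : V, B v w = 0) → v = 0)
    (x : V →ₗ[ℂ] V) (hsa : ∀ v w : V, B (x v) w = B v (x w)) (hx2 : x ∘ₗ x = 0)
    (n n₁ n₂ : ℕ) (hdim : finrank ℂ V = 2 * n) (hn : n = 2 * n₂ + n₁)
    (hrank : finrank ℂ ↥(LinearMap.range x) = 2 * n₂)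
    (k k₂ h : ℕ)
    (h1 : (Xpiece B x k k₂ h).Nonempty)
    (h2 : (Xpiece B x k (k₂ + 1) (h + 1)).Nonempty) :
    Xpiece B x k (k₂ + 1) (h + 1) ⊆ closure (Xpiece B x k k₂ h) := by
  exact stmt18_general (isAlt_iff_eq_neg_flip.2 (ext₂ fun v w => hskew w v)) hnondeg hsa h1
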